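/- arXiv:1602.08643 — 2 statements merged into one kernel-verified Lean document; each statement's English description precedes it below -/
import Mathlib

section
/- There exists a constant C > 0, depending only on κ₁ and κ₂, such that for all σ₁, σ₂ ∈ ℝ, |Λ(σ₁) − Λ(σ₂)| ≤ C·|σ₁ − σ₂|. -/
/-!
The derivative of `Λ` at `σ` is the third central moment of `μ_σ`, which is at most `2³` times the
third absolute moment of `μ_σ` about any point. Take that point to be the mode `x₀`, the minimizer
of `x ↦ ψ x - σ x`. Since `ψ'' ≥ κ`, i.e. `ψ - κ x² / 2` is convex, `μ_σ` recentred at `x₀` has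
density proportional to `exp (-V)` with respect to the Gaussian `N(0, 1/κ)`, where `V` is convex and
minimal at `0`. Such a density favours small `|x|`, so by Chebyshev's association inequality the
absolute moments of `μ_σ` about `x₀` are at most those of `N(0, 1/κ)`, whatever `σ` and `ψ` are.
-/

noncomputable section

open MeasureTheory Real

/-- The mean of the measure `μ_σ(dx) ∝ exp(-f(x)+σx) dx`. -/
def gibbsMean (f : ℝ → ℝ) (σ : ℝ) : ℝ :=
  (∫ y : ℝ, y * Real.exp (-f y + σ * y)) / (∫ y : ℝ, Real.exp (-f y + σ * y))

/-- The variance `Λ(σ)` of the measure `μ_σ(dx) ∝ exp(-f(x)+σx) dx`. -/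
def gibbsVar (f : ℝ → ℝ) (σ : ℝ) : ℝ :=
  (∫ x : ℝ, (x - gibbsMean f σ) ^ 2 * Real.exp (-f x + σ * x)) /
    (∫ x : ℝ, Real.exp (-f x + σ * x))

open ProbabilityTheory Filter Set
open scoped NNReal Topology

lemma integral_mul_le_mul_integral_of_antivary {Ω : Type*} {mΩ : MeasurableSpace Ω} {μ : Measure Ω}
    [IsProbabilityMeasure μ] {f g : Ω → ℝ} (hfg : Antivary f g) (hf : Integrable f μ)
    (hg : Integrable g μ) (h : Integrable (fun x ↦ f x * g x) μ) :
    ∫ x, f x * g x ∂μ ≤ (∫ x, f x ∂μ) * ∫ x, g x ∂μ := by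
  have h_diag : Integrable (fun z : Ω × Ω ↦ f z.1 * g z.1 + f z.2 * g z.2) (μ.prod μ) :=
    (h.comp_fst μ).add (h.comp_snd μ)
  have h_cross : Integrable (fun z : Ω × Ω ↦ f z.1 * g z.2 + g z.1 * f z.2) (μ.prod μ) :=
    (hf.mul_prod hg).add (hg.mul_prod hf)
  have h_le : ∫ z, (f z.1 * g z.1 + f z.2 * g z.2) ∂μ.prod μ
      ≤ ∫ z, (f z.1 * g z.2 + g z.1 * f z.2) ∂μ.prod μ :=
    integral_mono h_diag h_cross fun z ↦ by
      have : (f z.1 - f z.2) * (g z.1 - g z.2) ≤ 0 := by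
        simpa using hfg.sub_mul_sub_nonpos z.2 z.1
      dsimp only
      linarith
  rw [integral_add (h.comp_fst μ) (h.comp_snd μ), integral_add (hf.mul_prod hg) (hg.mul_prod hf),
    integral_prod_mul, integral_prod_mul, integral_fun_fst (fun x ↦ f x * g x),
    integral_fun_snd (fun x ↦ f x * g x)] at h_le
  simp only [probReal_univ, one_smul] at h_le
  linarith

lemma exp_neg_add_exp_neg_le_of_abs_le {V : ℝ → ℝ} (hV : ConvexOn ℝ univ V)
    (hmin : IsMinOn V univ 0) {x y : ℝ} (hxy : |x| ≤ |y|) :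
    exp (-V y) + exp (-V (-y)) ≤ exp (-V x) + exp (-V (-x)) := by
  have h_le : ∀ {a b : ℝ}, a ∈ uIcc 0 b → exp (-V b) ≤ exp (-V a) := fun {a b} hab ↦
    exp_le_exp.2 <| neg_le_neg <|
      (hV.le_max_of_mem_segment (mem_univ 0) (mem_univ b) (segment_eq_uIcc 0 b ▸ hab)).trans_eq
        (max_eq_right (hmin (mem_univ b)))
  have h_cases : (x ∈ uIcc 0 y ∧ -x ∈ uIcc 0 (-y)) ∨ (x ∈ uIcc 0 (-y) ∧ -x ∈ uIcc 0 y) := by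
    simp only [mem_uIcc]
    grind
  rcases h_cases with ⟨h, h'⟩ | ⟨h, h'⟩
  · exact add_le_add (h_le h) (h_le h')
  · exact (add_le_add (h_le h') (h_le h)).trans_eq (add_comm _ _)

-- `V` need not be even, so `exp (-V)` need not be antitone in `|x|`; its symmetrization is, and `γ`
-- and `f` do not see the difference.
lemma integral_tilted_neg_le_of_convexOn {γ : Measure ℝ} [IsProbabilityMeasure γ]
    [γ.IsNegInvariant] {V f : ℝ → ℝ} (hV : ConvexOn ℝ univ V) (hmin : IsMinOn V univ 0)
    (hf : Integrable f γ) (hf_mono : ∀ x y, |x| ≤ |y| → f x ≤ f y) :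
    ∫ x, f x ∂γ.tilted (fun x ↦ -V x) ≤ ∫ x, f x ∂γ := by
  set w : ℝ → ℝ := fun x ↦ exp (-V x) with hw
  have hw_cont : Continuous w := (continuousOn_univ.1 (hV.continuousOn isOpen_univ)).neg.rexp
  have hw_bdd : ∀ᵐ x ∂γ, ‖w x‖ ≤ exp (-V 0) := ae_of_all _ fun x ↦ by
    simpa [hw, abs_exp] using hmin (mem_univ x)
  have hw_int : Integrable w γ := .of_bound hw_cont.aestronglyMeasurable _ hw_bdd
  have hfw_int : Integrable (fun x ↦ f x * w x) γ := by
    simpa only [mul_comm] using hf.bdd_mul hw_cont.aestronglyMeasurable hw_bdd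
  have hf_even : ∀ x, f (-x) = f x := fun x ↦
    le_antisymm (hf_mono _ _ (abs_neg x).le) (hf_mono _ _ (abs_neg x).ge)
  have h_neg : (fun x ↦ f x * w (-x)) = fun x ↦ f (-x) * w (-x) := by simp only [hf_even]
  have hfw_neg_int : Integrable (fun x ↦ f x * w (-x)) γ := h_neg ▸ hfw_int.comp_neg
  have h_antivary : Antivary f fun x ↦ w x + w (-x) := fun x y hlt ↦
    hf_mono _ _ <| le_of_not_ge fun hle ↦
      hlt.not_ge (exp_neg_add_exp_neg_le_of_abs_le hV hmin hle)
  have h_cheb : ∫ x, f x * (w x + w (-x)) ∂γ ≤ (∫ x, f x ∂γ) * ∫ x, (w x + w (-x)) ∂γ :=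
    integral_mul_le_mul_integral_of_antivary h_antivary hf (hw_int.add hw_int.comp_neg)
      (by simpa only [mul_add] using! hfw_int.add hfw_neg_int)
  simp only [mul_add] at h_cheb
  rw [integral_add hfw_int hfw_neg_int, integral_add hw_int hw_int.comp_neg, h_neg,
    integral_neg_eq_self (fun x ↦ f x * w x), integral_neg_eq_self w] at h_cheb
  have h_tilted : ∫ x, f x ∂γ.tilted (fun x ↦ -V x) = (∫ x, f x * w x ∂γ) / ∫ x, w x ∂γ := by
    rw [integral_tilted, ← integral_div]
    congr with x
    simp only [hw, smul_eq_mul]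
    ring
  rw [h_tilted, div_le_iff₀ (integral_exp_pos hw_int)]
  linarith

section StrongConvexOn
variable {E : Type*} [NormedAddCommGroup E] [NormedSpace ℝ E] {s : Set E} {m : ℝ} {φ : E → ℝ}

lemma strongConvexOn_sub_linearMap (hφ : StrongConvexOn s m φ) (l : E →ₗ[ℝ] ℝ) :
    StrongConvexOn s m fun x ↦ φ x - l x := by
  have hl : UniformConvexOn s 0 fun x ↦ -l x :=
    uniformConvexOn_zero.2 (l.concaveOn hφ.1).neg
  simpa only [StrongConvexOn, add_zero, sub_eq_add_neg] using! UniformConvexOn.add hφ hl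

lemma strongConvexOn_univ_comp_add_right (hφ : StrongConvexOn univ m φ) (x₀ : E) :
    StrongConvexOn univ m fun x ↦ φ (x + x₀) := by
  refine ⟨convex_univ, fun x _ y _ a b ha hb hab ↦ ?_⟩
  have h := hφ.2 (mem_univ (x + x₀)) (mem_univ (y + x₀)) ha hb hab
  have hx₀ : a • (x + x₀) + b • (y + x₀) = a • x + b • y + x₀ := by
    rw [smul_add, smul_add, add_add_add_comm, ← add_smul, hab, one_smul]
  rwa [hx₀, add_sub_add_right_eq_sub] at h

lemma add_norm_sub_sq_le_of_isMinOn (hφ : StrongConvexOn s m φ) {x₀ x : E} (hmin : IsMinOn φ s x₀)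
    (hx₀ : x₀ ∈ s) (hx : x ∈ s) : φ x₀ + m / 2 * ‖x - x₀‖ ^ 2 ≤ φ x := by
  have h_seg : ∀ t ∈ Ioo (0 : ℝ) 1, φ x₀ + (1 - t) * (m / 2 * ‖x - x₀‖ ^ 2) ≤ φ x := by
    intro t ht
    have ht' : 0 ≤ 1 - t := sub_nonneg.2 ht.2.le
    have h_conv := hφ.2 hx hx₀ ht.1.le ht' (add_sub_cancel t 1)
    have h_min : φ x₀ ≤ φ (t • x + (1 - t) • x₀) :=
      hmin (hφ.1 hx hx₀ ht.1.le ht' (add_sub_cancel t 1))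
    simp only [smul_eq_mul] at h_conv
    refine le_of_mul_le_mul_left ?_ ht.1
    linarith
  have h_lim : Tendsto (fun t : ℝ ↦ φ x₀ + (1 - t) * (m / 2 * ‖x - x₀‖ ^ 2)) (𝓝[>] 0)
      (𝓝 (φ x₀ + m / 2 * ‖x - x₀‖ ^ 2)) :=
    tendsto_nhdsWithin_of_tendsto_nhds <| Continuous.tendsto' (by fun_prop) _ _ (by simp)
  exact le_of_tendsto h_lim (eventually_of_mem (Ioo_mem_nhdsGT one_pos) h_seg)

end StrongConvexOn

lemma continuous_of_strongConvexOn_univ {E : Type*} [NormedAddCommGroup E] [InnerProductSpace ℝ E]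
    [FiniteDimensional ℝ E] {m : ℝ} {φ : E → ℝ} (hφ : StrongConvexOn univ m φ) :
    Continuous φ := by
  have h_cont : Continuous fun x ↦ φ x - m / 2 * ‖x‖ ^ 2 :=
    continuousOn_univ.1 ((strongConvexOn_iff_convex.1 hφ).continuousOn isOpen_univ)
  exact (h_cont.add (by fun_prop : Continuous fun x ↦ m / 2 * ‖x‖ ^ 2)).congr fun x ↦
    sub_add_cancel (φ x) _

lemma exists_isMinOn_of_strongConvexOn {E : Type*} [NormedAddCommGroup E] [InnerProductSpace ℝ E]
    [FiniteDimensional ℝ E] {m : ℝ} (hm : 0 < m) {φ : E → ℝ} (hφ : StrongConvexOn univ m φ) :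
    ∃ x₀, IsMinOn φ univ x₀ := by
  have h_conv := strongConvexOn_iff_convex.1 hφ
  have hφ_cont := continuous_of_strongConvexOn_univ hφ
  have h_cont : Continuous fun x ↦ φ x - m / 2 * ‖x‖ ^ 2 := by fun_prop
  obtain ⟨l, c, h_aff, -⟩ := h_conv.exists_affine_le_of_lt (𝕜 := ℝ) (mem_univ 0) (sub_one_lt _)
    isClosed_univ (h_cont.lowerSemicontinuous.lowerSemicontinuousOn _)
  have h_lower : ∀ x, ‖x‖ * (m / 2 * ‖x‖ - ‖l‖) + c ≤ φ x := fun x ↦ by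
    have h₁ : l x + c ≤ φ x - m / 2 * ‖x‖ ^ 2 := h_aff ⟨x, mem_univ x⟩
    have h₂ := neg_le_of_abs_le (l.le_opNorm x)
    linarith
  have h_coercive : Tendsto φ (cocompact E) atTop :=
    tendsto_atTop_mono h_lower <| tendsto_atTop_add_const_right _ _ <|
      Tendsto.comp (g := fun r : ℝ ↦ r * (m / 2 * r - ‖l‖))
        (tendsto_id.atTop_mul_atTop₀ <| tendsto_atTop_add_const_right _ _ <|
          tendsto_id.const_mul_atTop (half_pos hm))
        tendsto_norm_cocompact_atTop
  obtain ⟨x₀, hx₀⟩ := hφ_cont.exists_forall_le h_coercive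
  exact ⟨x₀, fun x _ ↦ hx₀ x⟩

lemma strongConvexOn_univ_of_le_deriv2 {m : ℝ} {ψ : ℝ → ℝ} (hψ : ContDiff ℝ 2 ψ)
    (h : ∀ x, m ≤ deriv (deriv ψ) x) : StrongConvexOn univ m ψ := by
  have hψ' : ContDiff ℝ 1 (deriv ψ) := hψ.deriv'
  have h_deriv : ∀ x, HasDerivAt (fun y ↦ ψ y - m / 2 * y ^ 2) (deriv ψ x - m * x) x := fun x ↦
    ((hψ.differentiable two_ne_zero x).hasDerivAt.sub
      ((hasDerivAt_pow 2 x).const_mul (m / 2))).congr_deriv (by push_cast; ring)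
  have h_deriv2 : ∀ x, HasDerivAt (fun y ↦ deriv ψ y - m * y) (deriv (deriv ψ) x - m) x := fun x ↦
    ((hψ'.differentiable one_ne_zero x).hasDerivAt.sub
      ((hasDerivAt_id x).const_mul m)).congr_deriv (by rw [mul_one])
  refine strongConvexOn_iff_convex.2 ?_
  simp only [norm_eq_abs, sq_abs]
  exact convexOn_of_hasDerivWithinAt2_nonneg convex_univ
    (fun x _ ↦ (h_deriv x).continuousAt.continuousWithinAt)
    (fun x _ ↦ (h_deriv x).hasDerivWithinAt) (fun x _ ↦ (h_deriv2 x).hasDerivWithinAt)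
    fun x _ ↦ sub_nonneg.2 (h x)

lemma integrable_exp_neg_of_strongConvexOn {m : ℝ} (hm : 0 < m) {φ : ℝ → ℝ}
    (hφ : StrongConvexOn univ m φ) : Integrable fun x ↦ exp (-φ x) := by
  obtain ⟨x₀, hx₀⟩ := exists_isMinOn_of_strongConvexOn hm hφ
  have h_gauss : Integrable fun x ↦ exp (-φ x₀) * exp (-(m / 2) * (x - x₀) ^ 2) :=
    ((integrable_exp_neg_mul_sq (half_pos hm)).comp_sub_right x₀).const_mul _
  refine h_gauss.mono' (continuous_of_strongConvexOn_univ hφ).neg.rexp.aestronglyMeasurable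
    (ae_of_all _ fun x ↦ ?_)
  have h_growth := add_norm_sub_sq_le_of_isMinOn hφ hx₀ (mem_univ x₀) (mem_univ x)
  rw [norm_eq_abs, sq_abs] at h_growth
  rw [norm_of_nonneg (exp_pos _).le, ← exp_add]
  exact exp_le_exp.2 (by linarith)

lemma abs_centralMoment_le {Ω : Type*} {mΩ : MeasurableSpace Ω} {P : Measure Ω}
    [IsProbabilityMeasure P] {X : Ω → ℝ} {n : ℕ} (hX : MemLp X n P) (c : ℝ) :
    |centralMoment X n P| ≤ 2 ^ n * ∫ ω, |X ω - c| ^ n ∂P := by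
  rcases eq_or_ne n 0 with rfl | hn
  · simp [centralMoment]
  have hn' : (1 : ENNReal) ≤ n := by exact_mod_cast Nat.one_le_iff_ne_zero.2 hn
  have hXc : MemLp (fun ω ↦ X ω - c) n P := hX.sub (memLp_const c)
  have hXc_int : Integrable (fun ω ↦ |X ω - c| ^ n) P := hXc.integrable_norm_pow'
  have h_mean : ∫ ω, (X ω - c) ∂P = P[X] - c := by
    rw [integral_sub (hX.integrable hn') (integrable_const c), integral_const, probReal_univ,
      one_smul]
  have h_jensen : |P[X] - c| ^ n ≤ ∫ ω, |X ω - c| ^ n ∂P := by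
    rw [← h_mean]
    exact (convexOn_univ_norm.pow (fun _ _ ↦ norm_nonneg _) n).map_integral_le
      (by fun_prop) isClosed_univ (ae_of_all _ fun _ ↦ mem_univ _) (hXc.integrable hn') hXc_int
  have h_pointwise : ∀ ω, |X ω - P[X]| ^ n ≤ 2 ^ (n - 1) * (|X ω - c| ^ n + |P[X] - c| ^ n) :=
    fun ω ↦ calc
      |X ω - P[X]| ^ n ≤ (|X ω - c| + |P[X] - c|) ^ n := by
        gcongr
        simpa only [abs_sub_comm c] using abs_sub_le (X ω) c P[X]
      _ ≤ _ := add_pow_le (abs_nonneg _) (abs_nonneg _) n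
  calc |centralMoment X n P|
      ≤ ∫ ω, |X ω - P[X]| ^ n ∂P := by
        simpa only [← abs_pow] using! abs_integral_le_integral_abs
    _ ≤ ∫ ω, 2 ^ (n - 1) * (|X ω - c| ^ n + |P[X] - c| ^ n) ∂P :=
        integral_mono_of_nonneg (ae_of_all _ fun _ ↦ by positivity)
          ((hXc_int.add (integrable_const _)).const_mul _) (ae_of_all _ h_pointwise)
    _ = 2 ^ (n - 1) * (∫ ω, |X ω - c| ^ n ∂P + |P[X] - c| ^ n) := by
        rw [integral_const_mul, integral_add hXc_int (integrable_const _), integral_const,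
          probReal_univ, one_smul]
    _ ≤ 2 ^ (n - 1) * (∫ ω, |X ω - c| ^ n ∂P + ∫ ω, |X ω - c| ^ n ∂P) := by gcongr
    _ = 2 ^ n * ∫ ω, |X ω - c| ^ n ∂P := by
        rw [← two_mul, ← mul_assoc, pow_sub_one_mul hn]

section TiltedMul
variable {Ω : Type*} {mΩ : MeasurableSpace Ω} {μ : Measure Ω} {X : Ω → ℝ} {t : ℝ}

lemma hasDerivAt_integral_pow_tilted_mul (ht : t ∈ interior (integrableExpSet X μ)) (k : ℕ) :
    HasDerivAt (fun s ↦ ∫ ω, X ω ^ k ∂μ.tilted (s * X ·))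
      (∫ ω, X ω ^ (k + 1) ∂μ.tilted (t * X ·)
        - (∫ ω, X ω ^ k ∂μ.tilted (t * X ·)) * ∫ ω, X ω ∂μ.tilted (t * X ·)) t := by
  have h_eq : ∀ (j : ℕ) (s : ℝ), ∫ ω, X ω ^ j ∂μ.tilted (s * X ·)
      = (∫ ω, X ω ^ j * exp (s * X ω) ∂μ) / mgf X μ s := fun j s ↦ by
    rw [integral_tilted_mul_eq_mgf, ← integral_div]
    congr with ω
    rw [smul_eq_mul]
    ring
  have h_mean := h_eq 1 t
  simp only [pow_one] at h_mean
  rcases eq_zero_or_neZero μ with rfl | hμ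
  · simpa using hasDerivAt_const t (0 : ℝ)
  have h_mgf : mgf X μ t ≠ 0 :=
    (mgf_pos' hμ.out (interior_subset (s := integrableExpSet X μ) ht)).ne'
  simp only [h_eq, h_mean]
  refine ((hasDerivAt_integral_pow_mul_exp_real ht k).div (hasDerivAt_mgf ht) h_mgf).congr_deriv ?_
  field_simp

lemma centralMoment_three_eq {P : Measure Ω} [IsProbabilityMeasure P] (hX : MemLp X 3 P) :
    centralMoment X 3 P
      = ∫ ω, X ω ^ 3 ∂P - 3 * P[X] * ∫ ω, X ω ^ 2 ∂P + 2 * P[X] ^ 3 := by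
  have h_int : ∀ k : ℕ, k ≤ 3 → Integrable (fun ω ↦ X ω ^ k) P := fun k hk ↦ by
    have hXk : MemLp X k P := hX.mono_exponent (by exact_mod_cast hk)
    exact hXk.integrable_norm_pow'.mono' (hX.1.pow k) (ae_of_all _ fun ω ↦ (norm_pow _ k).le)
  have h_linear : Integrable (fun ω ↦ 3 * P[X] ^ 2 * X ω) P := by
    simpa only [pow_one] using (h_int 1 (by norm_num)).const_mul (3 * P[X] ^ 2)
  have h_square : Integrable (fun ω ↦ 3 * P[X] * X ω ^ 2) P := (h_int 2 (by norm_num)).const_mul _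
  have h_head : Integrable (fun ω ↦ X ω ^ 3 - 3 * P[X] * X ω ^ 2) P :=
    (h_int 3 le_rfl).sub h_square
  have h_tail : Integrable (fun ω ↦ 3 * P[X] ^ 2 * X ω - P[X] ^ 3) P :=
    h_linear.sub (integrable_const _)
  have h_expand : ∀ ω, (X ω - P[X]) ^ 3
      = (X ω ^ 3 - 3 * P[X] * X ω ^ 2) + (3 * P[X] ^ 2 * X ω - P[X] ^ 3) := fun ω ↦ by ring
  simp only [centralMoment, Pi.pow_apply, Pi.sub_apply, h_expand]
  rw [integral_add h_head h_tail, integral_sub (h_int 3 le_rfl) h_square,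
    integral_sub h_linear (integrable_const _), integral_const_mul, integral_const_mul,
    integral_const, probReal_univ, one_smul]
  ring

lemma hasDerivAt_variance_tilted_mul (ht : t ∈ interior (integrableExpSet X μ)) :
    HasDerivAt (fun s ↦ Var[X; μ.tilted (s * X ·)])
      (centralMoment X 3 (μ.tilted (t * X ·))) t := by
  rcases eq_zero_or_neZero μ with rfl | hμ
  · simpa [centralMoment] using hasDerivAt_const t (0 : ℝ)
  have h_prob : ∀ s ∈ interior (integrableExpSet X μ),
      IsProbabilityMeasure (μ.tilted (s * X ·)) := fun s hs ↦
    isProbabilityMeasure_tilted (interior_subset (s := integrableExpSet X μ) hs)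
  have h_var : (fun s ↦ Var[X; μ.tilted (s * X ·)]) =ᶠ[𝓝 t] fun s ↦
      ∫ ω, X ω ^ 2 ∂μ.tilted (s * X ·) - (∫ ω, X ω ^ 1 ∂μ.tilted (s * X ·)) ^ 2 := by
    filter_upwards [isOpen_interior.mem_nhds ht] with s hs
    have := h_prob s hs
    simpa only [pow_one] using! variance_eq_sub (memLp_tilted_mul hs 2)
  have h_deriv := (hasDerivAt_integral_pow_tilted_mul ht 2).sub
    ((hasDerivAt_integral_pow_tilted_mul ht 1).pow 2)
  have := h_prob t ht
  refine (h_deriv.congr_of_eventuallyEq h_var).congr_deriv ?_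
  rw [centralMoment_three_eq (memLp_tilted_mul ht 3)]
  simp only [pow_one]
  push_cast
  ring

end TiltedMul

lemma gaussianReal_eq_tilted (m : ℝ) {v : ℝ≥0} (hv : v ≠ 0) :
    gaussianReal m v = volume.tilted fun x ↦ -(x - m) ^ 2 / (2 * v) := by
  have h_norm : (√(2 * π * v))⁻¹ * ∫ x, exp (-(x - m) ^ 2 / (2 * v)) = 1 := by
    rw [← integral_const_mul]
    exact integral_gaussianPDFReal_eq_one m hv
  rw [gaussianReal_of_var_ne_zero m hv, Measure.tilted]
  congr with x
  rw [gaussianPDF, gaussianPDFReal, eq_inv_of_mul_eq_one_left h_norm, inv_mul_eq_div]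

instance isNegInvariant_gaussianReal (v : ℝ≥0) : (gaussianReal 0 v).IsNegInvariant :=
  ⟨by simpa only [neg_zero] using! gaussianReal_map_neg (μ := 0) (v := v)⟩

lemma integral_tilted_comp_add_right {G E : Type*} [AddGroup G] [MeasurableSpace G]
    [MeasurableAdd G] [NormedAddCommGroup E] [NormedSpace ℝ E] {μ : Measure G}
    [μ.IsAddRightInvariant] (f : G → ℝ) (g : G → E) (a : G) :
    ∫ x, g (x + a) ∂μ.tilted (fun x ↦ f (x + a)) = ∫ x, g x ∂μ.tilted f := by
  rw [integral_tilted, integral_tilted, integral_add_right_eq_self (fun x ↦ exp (f x)),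
    integral_add_right_eq_self (fun x ↦ (exp (f x) / ∫ x, exp (f x) ∂μ) • g x)]

lemma integral_tilted_neg_le_integral_gaussianReal {κ : ℝ≥0} (hκ : κ ≠ 0) {φ f : ℝ → ℝ}
    (hφ : StrongConvexOn univ κ φ) {x₀ : ℝ} (hmin : IsMinOn φ univ x₀)
    (hf : Integrable f (gaussianReal 0 κ⁻¹)) (hf_mono : ∀ x y, |x| ≤ |y| → f x ≤ f y) :
    ∫ x, f (x - x₀) ∂volume.tilted (fun x ↦ -φ x) ≤ ∫ x, f x ∂gaussianReal 0 κ⁻¹ := by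
  set V : ℝ → ℝ := fun x ↦ φ (x + x₀) - κ / 2 * x ^ 2 with hV
  have hV_convex : ConvexOn ℝ univ V := by
    simpa only [norm_eq_abs, sq_abs] using
      strongConvexOn_iff_convex.1 (strongConvexOn_univ_comp_add_right hφ x₀)
  have hV_min : IsMinOn V univ 0 := fun x _ ↦ by
    have h_growth := add_norm_sub_sq_le_of_isMinOn hφ hmin (mem_univ x₀) (mem_univ (x + x₀))
    rw [add_sub_cancel_right, norm_eq_abs, sq_abs] at h_growth
    simp only [hV, mem_ofPred_eq, zero_add]
    linarith
  have h_gauss : (gaussianReal 0 κ⁻¹).tilted (fun x ↦ -V x)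
      = volume.tilted fun x ↦ -φ (x + x₀) := by
    have h_int : Integrable fun x : ℝ ↦ exp (-(x - 0) ^ 2 / (2 * ↑κ⁻¹)) := by
      simpa only [sub_zero, div_eq_inv_mul, mul_neg, neg_mul] using
        integrable_exp_neg_mul_sq (b := (2 * ↑κ⁻¹)⁻¹) (by positivity)
    rw [gaussianReal_eq_tilted 0 (inv_ne_zero hκ), tilted_tilted h_int]
    congr with x
    simp only [hV, Pi.add_apply, NNReal.coe_inv]
    field_simp
    ring
  calc ∫ x, f (x - x₀) ∂volume.tilted (fun x ↦ -φ x)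
      = ∫ x, f x ∂(gaussianReal 0 κ⁻¹).tilted (fun x ↦ -V x) := by
        rw [h_gauss, ← integral_tilted_comp_add_right (fun x ↦ -φ x) _ x₀]
        simp only [add_sub_cancel_right]
    _ ≤ ∫ x, f x ∂gaussianReal 0 κ⁻¹ :=
        integral_tilted_neg_le_of_convexOn hV_convex hV_min hf hf_mono

/-- The probability measure `μ_σ(dx) ∝ exp(-ψ(x)+σx) dx`, encoded as an exponential tilt of Lebesgue
measure; it is the zero measure if this density is not integrable. -/
def gibbsMeasure (ψ : ℝ → ℝ) (σ : ℝ) : Measure ℝ :=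
  volume.tilted fun x ↦ -ψ x + σ * x

lemma integral_gibbsMeasure (ψ g : ℝ → ℝ) (σ : ℝ) :
    ∫ x, g x ∂gibbsMeasure ψ σ
      = (∫ x, g x * exp (-ψ x + σ * x)) / ∫ x, exp (-ψ x + σ * x) := by
  rw [gibbsMeasure, integral_tilted, ← integral_div]
  congr with x
  rw [smul_eq_mul, div_mul_eq_mul_div, mul_comm]

lemma gibbsVar_eq_variance (ψ : ℝ → ℝ) (σ : ℝ) :
    gibbsVar ψ σ = Var[id; gibbsMeasure ψ σ] := by
  rw [variance_eq_integral aemeasurable_id, integral_gibbsMeasure, integral_gibbsMeasure]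
  rfl

section GibbsMeasure
variable {ψ : ℝ → ℝ} {κ : ℝ}

lemma strongConvexOn_sub_mul (hψ : StrongConvexOn univ κ ψ) (σ : ℝ) :
    StrongConvexOn univ κ fun x ↦ ψ x - σ * x :=
  strongConvexOn_sub_linearMap hψ (LinearMap.mul ℝ ℝ σ)

lemma gibbsMeasure_eq_tilted_neg (ψ : ℝ → ℝ) (σ : ℝ) :
    gibbsMeasure ψ σ = volume.tilted fun x ↦ -(ψ x - σ * x) := by
  simp only [gibbsMeasure, neg_sub', sub_neg_eq_add]

lemma gibbsMeasure_eq_tilted_mul (hψ : Integrable fun x ↦ exp (-ψ x)) (σ : ℝ) :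
    gibbsMeasure ψ σ = (volume.tilted fun x ↦ -ψ x).tilted (σ * id ·) := by
  rw [tilted_tilted hψ]
  rfl

lemma mem_interior_integrableExpSet_tilted_neg (hκ : 0 < κ) (hψ : StrongConvexOn univ κ ψ)
    (σ : ℝ) : σ ∈ interior (integrableExpSet id (volume.tilted fun x ↦ -ψ x)) := by
  have h_univ : integrableExpSet id (volume.tilted fun x ↦ -ψ x) = univ := by
    refine eq_univ_of_forall fun τ ↦
      (integrable_tilted_iff (integrable_exp_neg_of_strongConvexOn hκ hψ) _).2 ?_
    simpa only [smul_eq_mul, ← exp_add, neg_sub', sub_neg_eq_add] using!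
      integrable_exp_neg_of_strongConvexOn hκ (strongConvexOn_sub_mul hψ τ)
  simp only [h_univ, interior_univ, mem_univ]

lemma hasDerivAt_gibbsVar (hκ : 0 < κ) (hψ : StrongConvexOn univ κ ψ) (σ : ℝ) :
    HasDerivAt (gibbsVar ψ) (centralMoment id 3 (gibbsMeasure ψ σ)) σ := by
  have h_deriv := hasDerivAt_variance_tilted_mul (mem_interior_integrableExpSet_tilted_neg hκ hψ σ)
  simpa only [← gibbsMeasure_eq_tilted_mul (integrable_exp_neg_of_strongConvexOn hκ hψ),
    ← gibbsVar_eq_variance] using h_deriv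

end GibbsMeasure

lemma abs_centralMoment_gibbsMeasure_le {κ : ℝ≥0} (hκ : κ ≠ 0) {ψ : ℝ → ℝ}
    (hψ : StrongConvexOn univ κ ψ) (σ : ℝ) (n : ℕ) :
    |centralMoment id n (gibbsMeasure ψ σ)| ≤ 2 ^ n * ∫ x, |x| ^ n ∂gaussianReal 0 κ⁻¹ := by
  have hκ' : (0 : ℝ) < κ := NNReal.coe_pos.2 (pos_iff_ne_zero.2 hκ)
  have hψσ := strongConvexOn_sub_mul hψ σ
  obtain ⟨x₀, hx₀⟩ := exists_isMinOn_of_strongConvexOn hκ' hψσ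
  have h_prob : IsProbabilityMeasure (gibbsMeasure ψ σ) := by
    rw [gibbsMeasure_eq_tilted_neg]
    exact isProbabilityMeasure_tilted (integrable_exp_neg_of_strongConvexOn hκ' hψσ)
  have h_memLp : MemLp id n (gibbsMeasure ψ σ) := by
    rw [gibbsMeasure_eq_tilted_mul (integrable_exp_neg_of_strongConvexOn hκ' hψ)]
    exact memLp_tilted_mul (mem_interior_integrableExpSet_tilted_neg hκ' hψ σ) n
  have h_gauss_int : Integrable (fun x ↦ |x| ^ n) (gaussianReal 0 κ⁻¹) :=
    MemLp.integrable_norm_pow' (memLp_id_gaussianReal n)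
  calc |centralMoment id n (gibbsMeasure ψ σ)|
      ≤ 2 ^ n * ∫ x, |x - x₀| ^ n ∂gibbsMeasure ψ σ := abs_centralMoment_le h_memLp x₀
    _ ≤ 2 ^ n * ∫ x, |x| ^ n ∂gaussianReal 0 κ⁻¹ := by
        rw [gibbsMeasure_eq_tilted_neg]
        gcongr
        exact integral_tilted_neg_le_integral_gaussianReal hκ hψσ hx₀ h_gauss_int
          fun x y hxy ↦ by gcongr

theorem variance_lipschitz_general {κ : ℝ} (hκ : 0 < κ) :
    ∃ C > 0, ∀ ψ : ℝ → ℝ, StrongConvexOn univ κ ψ →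
      ∀ σ₁ σ₂ : ℝ, |gibbsVar ψ σ₁ - gibbsVar ψ σ₂| ≤ C * |σ₁ - σ₂| := by
  lift κ to ℝ≥0 using hκ.le
  have hκ₀ : κ ≠ 0 := (NNReal.coe_pos.1 hκ).ne'
  refine ⟨2 ^ 3 * ∫ x, |x| ^ 3 ∂gaussianReal 0 κ⁻¹ + 1,
    add_pos_of_nonneg_of_pos (by positivity) one_pos, fun ψ hψ σ₁ σ₂ ↦ ?_⟩
  refine convex_univ.norm_image_sub_le_of_norm_hasDerivWithin_le
    (fun σ _ ↦ (hasDerivAt_gibbsVar hκ hψ σ).hasDerivWithinAt)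
    (fun σ _ ↦ ?_) (mem_univ σ₂) (mem_univ σ₁)
  exact (abs_centralMoment_gibbsMeasure_le hκ₀ hψ σ 3).trans (le_add_of_nonneg_right zero_le_one)

/-- the variance `Λ` is Lipschitz, with a constant depending
only on `κ₁` and `κ₂`. -/
theorem variance_lipschitz
    (κ₁ κ₂ : ℝ) (hκ₁ : 0 < κ₁) (hκ : κ₁ ≤ κ₂) :
    ∃ C > 0, ∀ ψ : ℝ → ℝ, ContDiff ℝ 2 ψ →
      (∀ y : ℝ, κ₁ ≤ deriv (deriv ψ) y ∧ deriv (deriv ψ) y ≤ κ₂) →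
      ∀ σ₁ σ₂ : ℝ, |gibbsVar ψ σ₁ - gibbsVar ψ σ₂| ≤ C * |σ₁ - σ₂| := by
  obtain ⟨C, hC, h_lip⟩ := variance_lipschitz_general hκ₁
  exact ⟨C, hC, fun ψ hψ hψ'' ↦ h_lip ψ (strongConvexOn_univ_of_le_deriv2 hψ fun y ↦ (hψ'' y).1)⟩
end
end

section
/- For the harmonic chain with ψ(r) = K₁·r² and defect P(r) = K₂·r², K₁, K₂ > 0, and any coarsening parameters p ≥ 1, M ≥ 2 with N = p·(M−1) + 1, the coarse-grained free energy difference satisfies F_M^cg(x,P) − F_M^cg(x,0) = K₁·K₂·N·x²/( K₁·N + K₂·(N−1) ) + (1/2)·log( (K₁·N + K₂·(N−1))/(K₁·N) ); in particular it is independent of p and M and equals the defect-formation free energy F_N^P(x) − F_N(x) of the fully resolved chain with N atoms. -/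
/-!
Integrating out the outermost interior atom of a harmonic chain joins two springs in series: after
completing the square, stiffnesses `s` and `c` become `s c / (s + c)`. By induction, a chain with
first stiffness `a` and compliances `c i⁻¹` adding up to `R` over the other bonds acts as one spring
of stiffness `a / (1 + a R)`. This form of the series law needs only `0 < 1 + a R`, so it also
covers `a ≤ 0`.

A quadratic defect shifts `a` by a constant, so the defect-formation energy depends on the bonds
after the first one only through `R`. Coarsening preserves it: `M - 1` bonds of stiffness `K₁ / p`
have the compliance `p (M - 1) / K₁ = (N - 1) / K₁` of the `N - 1` bonds they replace.
-/

noncomputable section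

open MeasureTheory Real

/-- Extend interior degrees of freedom `w : ℝ^(n-1)` to the whole chain via the
boundary conditions `w 0 = 0` and `w n = b`. -/
def bc (n : ℕ) (b : ℝ) (w : Fin (n - 1) → ℝ) : ℕ → ℝ := fun i =>
  if h : 0 < i ∧ i < n then w ⟨i - 1, by omega⟩ else if i = 0 then 0 else b

/-- The chain energy `∑_{i=1}^n φ_i (u_i - u_{i-1})` with boundary conditions
`u 0 = 0`, `u n = b`. -/
def chainE (φ : ℕ → ℝ → ℝ) (n : ℕ) (b : ℝ) (u : Fin (n - 1) → ℝ) : ℝ :=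
  ∑ i ∈ Finset.range n, φ (i + 1) (bc n b u (i + 1) - bc n b u i)

/-- The free energy of the fully resolved chain with `N` atoms:
`-log ∫_{ℝ^{N-1}} exp(-∑ φ_i(u_i-u_{i-1}) - defect(u₁)) du`, `u₀ = 0`, `u_N = N x`. -/
def freeEnergy (φ : ℕ → ℝ → ℝ) (defect : ℝ → ℝ) (N : ℕ) (x : ℝ) : ℝ :=
  - Real.log (∫ u : Fin (N - 1) → ℝ,
      Real.exp (-(chainE φ N (N * x) u) - defect (bc N (N * x) u 1)))

/-- The coarse-grained harmonic chain energy with fully resolved first bond: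
`V_cg(w) = ψ(w₁ - w₀) + ∑_{j=2}^M p ψ(p⁻¹ (w_j - w_{j-1}))` with `ψ(r) = K₁ r²`,
boundary conditions `w₀ = 0`, `w_M = b`. -/
def Vcg (K₁ : ℝ) (p M : ℕ) (b : ℝ) (w : Fin (M - 1) → ℝ) : ℝ :=
  K₁ * (bc M b w 1 - bc M b w 0) ^ 2 +
    ∑ j ∈ Finset.Icc 2 M, (p : ℝ) * K₁ * ((bc M b w j - bc M b w (j - 1)) / p) ^ 2

/-- The coarse-grained free energy with defect term `defect(w₁)`. -/
def Fcg (K₁ : ℝ) (p M N : ℕ) (x : ℝ) (defect : ℝ → ℝ) : ℝ :=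
  - Real.log (∫ w : Fin (M - 1) → ℝ,
      Real.exp (-(Vcg K₁ p M (N * x) w) - defect (bc M (N * x) w 1)))

open scoped ENNReal

/-- The partition function of the chain energy `chainE φ N b` with a defect term in the position
of the first atom, as a Lebesgue integral so that no integrability is presupposed. -/
def chainPartition (φ : ℕ → ℝ → ℝ) (defect : ℝ → ℝ) (N : ℕ) (b : ℝ) : ℝ≥0∞ :=
  ∫⁻ u : Fin (N - 1) → ℝ, ENNReal.ofReal (exp (-chainE φ N b u - defect (bc N b u 1)))

/-- The compliance (inverse stiffness) in series of all bonds of an `N`-bond chain except the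
first one, which is kept apart because the defect acts on it. -/
def tailCompliance (c : ℕ → ℝ) (N : ℕ) : ℝ :=
  ∑ i ∈ Finset.Icc 2 N, (c i)⁻¹

/-- The bond stiffnesses of the coarse-grained chain: the first bond is fully resolved, and every
other bond stands for `p` original bonds in series. -/
def coarseStiffness (K : ℝ) (p : ℕ) (i : ℕ) : ℝ :=
  if i = 1 then K else K / p

section Chain

lemma bc_zero (n : ℕ) (b : ℝ) (w : Fin (n - 1) → ℝ) : bc n b w 0 = 0 := by
  simp [bc]

lemma bc_self {n : ℕ} (hn : n ≠ 0) (b : ℝ) (w : Fin (n - 1) → ℝ) : bc n b w n = b := by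
  simp [bc, hn]

lemma bc_snoc {n i : ℕ} (hi : i ≤ n + 1) (b t : ℝ) (w : Fin n → ℝ) :
    bc (n + 2) b (Fin.snoc (α := fun _ => ℝ) w t) i = bc (n + 1) t w i := by
  rcases Nat.eq_zero_or_pos i with rfl | hpos
  · rw [bc_zero, bc_zero]
  rcases hi.lt_or_eq with hlt | rfl
  · have hlt' : i - 1 < n := by omega
    simp [bc, Fin.snoc, hpos, hlt, hlt', Nat.lt_succ_of_lt hlt]
  · simp [bc, Fin.snoc]

variable {φ : ℕ → ℝ → ℝ} {defect : ℝ → ℝ}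

lemma chainE_snoc (φ : ℕ → ℝ → ℝ) (n : ℕ) (b t : ℝ) (w : Fin n → ℝ) :
    chainE φ (n + 2) b (Fin.snoc (α := fun _ => ℝ) w t) =
      chainE φ (n + 1) t w + φ (n + 2) (b - t) := by
  rw [chainE, Finset.sum_range_succ, bc_self (by omega), bc_snoc le_rfl, bc_self (by omega), chainE]
  congr 1
  refine Finset.sum_congr rfl fun i hi => ?_
  rw [Finset.mem_range] at hi
  rw [bc_snoc hi, bc_snoc hi.le]

lemma chainE_one (φ : ℕ → ℝ → ℝ) (b : ℝ) (u : Fin 0 → ℝ) : chainE φ 1 b u = φ 1 b := by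
  simp [chainE, bc]

lemma measurable_bc (n : ℕ) (b : ℝ) (i : ℕ) :
    Measurable fun w : Fin (n - 1) → ℝ => bc n b w i := by
  unfold bc
  split_ifs <;> fun_prop

lemma measurable_exp_neg_chainE_sub (hφ : ∀ i, Measurable (φ i)) (hdefect : Measurable defect)
    (N : ℕ) (b : ℝ) :
    Measurable fun u : Fin (N - 1) → ℝ => exp (-chainE φ N b u - defect (bc N b u 1)) := by
  unfold chainE
  have hbc := measurable_bc N b
  fun_prop

lemma freeEnergy_eq_neg_log_chainPartition (hφ : ∀ i, Measurable (φ i))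
    (hdefect : Measurable defect) (N : ℕ) (x : ℝ) :
    freeEnergy φ defect N x = -log (chainPartition φ defect N (N * x)).toReal := by
  rw [freeEnergy, integral_eq_lintegral_of_nonneg_ae (.of_forall fun u => (exp_pos _).le)
    (measurable_exp_neg_chainE_sub hφ hdefect N (N * x)).aestronglyMeasurable, chainPartition]

lemma chainPartition_one (φ : ℕ → ℝ → ℝ) (defect : ℝ → ℝ) (b : ℝ) :
    chainPartition φ defect 1 b = ENNReal.ofReal (exp (-φ 1 b - defect b)) := by
  have hpoint (u : Fin 0 → ℝ) :
      ENNReal.ofReal (exp (-chainE φ 1 b u - defect (bc 1 b u 1))) =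
        ENNReal.ofReal (exp (-φ 1 b - defect b)) := by
    rw [chainE_one, bc_self one_ne_zero]
  simp [chainPartition, hpoint, Measure.volume_pi_eq_dirac (0 : Fin 0 → ℝ)]

lemma lintegral_snoc {α : Type*} [MeasureSpace α] [SigmaFinite (volume : Measure α)] {n : ℕ}
    {f : (Fin (n + 1) → α) → ℝ≥0∞} (hf : Measurable f) :
    ∫⁻ u, f u = ∫⁻ t : α, ∫⁻ w : Fin n → α, f (Fin.snoc (α := fun _ => α) w t) := by
  let e := MeasurableEquiv.piFinSuccAbove (fun _ : Fin (n + 1) => α) (Fin.last n)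
  have he : MeasurePreserving e.symm :=
    (volume_preserving_piFinSuccAbove (fun _ : Fin (n + 1) => α) (Fin.last n)).symm
  have hsymm (t : α) (w : Fin n → α) : e.symm (t, w) = Fin.snoc (α := fun _ => α) w t :=
    Fin.insertNth_last' t w
  rw [← he.lintegral_comp hf, Measure.volume_eq_prod,
    lintegral_prod (fun z => f (e.symm z)) (hf.comp e.symm.measurable).aemeasurable]
  simp only [hsymm]

lemma chainPartition_succ (hφ : ∀ i, Measurable (φ i)) (hdefect : Measurable defect)
    {N : ℕ} (hN : 1 ≤ N) (b : ℝ) :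
    chainPartition φ defect (N + 1) b =
      ∫⁻ t, ENNReal.ofReal (exp (-φ (N + 1) (b - t))) * chainPartition φ defect N t := by
  obtain ⟨n, rfl⟩ : ∃ n, N = n + 1 := ⟨N - 1, by omega⟩
  have hmeas (M : ℕ) (y : ℝ) := (measurable_exp_neg_chainE_sub hφ hdefect M y).ennreal_ofReal
  calc chainPartition φ defect (n + 2) b
      = ∫⁻ t, ∫⁻ w : Fin n → ℝ, ENNReal.ofReal (exp
          (-chainE φ (n + 2) b (Fin.snoc (α := fun _ => ℝ) w t)
            - defect (bc (n + 2) b (Fin.snoc (α := fun _ => ℝ) w t) 1))) :=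
        lintegral_snoc (hmeas (n + 2) b)
    _ = ∫⁻ t, ∫⁻ w : Fin n → ℝ, ENNReal.ofReal (exp (-φ (n + 2) (b - t))) *
          ENNReal.ofReal (exp (-chainE φ (n + 1) t w - defect (bc (n + 1) t w 1))) := by
        refine lintegral_congr fun t => lintegral_congr fun w => ?_
        rw [chainE_snoc, bc_snoc (by omega), ← ENNReal.ofReal_mul (exp_pos _).le, ← exp_add]
        ring_nf
    _ = ∫⁻ t, ENNReal.ofReal (exp (-φ (n + 2) (b - t))) * chainPartition φ defect (n + 1) t :=
        lintegral_congr fun t => lintegral_const_mul _ (hmeas (n + 1) t)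

end Chain

section Springs

lemma lintegral_springs_in_series {s c : ℝ} (hsc : 0 < s + c) (y : ℝ) :
    ∫⁻ t : ℝ, ENNReal.ofReal (exp (-(s * t ^ 2 + c * (y - t) ^ 2))) =
      ENNReal.ofReal (√(π / (s + c)) * exp (-(s * c / (s + c) * y ^ 2))) := by
  have complete_square (t : ℝ) : exp (-(s * t ^ 2 + c * (y - t) ^ 2)) =
      exp (-(s + c) * (t - c * y / (s + c)) ^ 2) * exp (-(s * c / (s + c) * y ^ 2)) := by
    rw [← exp_add]
    congr 1
    field_simp
    ring
  have hint : Integrable fun t : ℝ => exp (-(s + c) * (t - c * y / (s + c)) ^ 2) :=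
    (integrable_exp_neg_mul_sq hsc).comp_sub_right _
  simp_rw [complete_square]
  rw [← ofReal_integral_eq_lintegral_ofReal (hint.mul_const _) (.of_forall fun t => by positivity),
    integral_mul_const, integral_sub_right_eq_self (fun t : ℝ => exp (-(s + c) * t ^ 2)),
    integral_gaussian]

variable {c : ℕ → ℝ} {N : ℕ}

lemma tailCompliance_one (c : ℕ → ℝ) : tailCompliance c 1 = 0 := by
  simp [tailCompliance]

lemma tailCompliance_succ (c : ℕ → ℝ) (hN : 1 ≤ N) :
    tailCompliance c (N + 1) = tailCompliance c N + (c (N + 1))⁻¹ :=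
  Finset.sum_Icc_succ_top (by omega) _

lemma tailCompliance_nonneg (hc : ∀ i, 2 ≤ i → 0 < c i) (N : ℕ) : 0 ≤ tailCompliance c N :=
  Finset.sum_nonneg fun i hi => (inv_pos.2 (hc i (Finset.mem_Icc.1 hi).1)).le

lemma one_add_mul_pos_of_le {a r s : ℝ} (hr : 0 ≤ r) (hrs : r ≤ s) (h : 0 < 1 + a * s) :
    0 < 1 + a * r := by
  rcases le_total 0 a with ha | ha
  · positivity
  · linarith [mul_le_mul_of_nonpos_left hrs ha]

lemma series_stiffness_add {a R k : ℝ} (hk : k ≠ 0) (hstab : 1 + a * R ≠ 0) :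
    a / (1 + a * R) + k = k * (1 + a * (R + k⁻¹)) / (1 + a * R) := by
  field_simp
  ring

lemma lintegral_append_spring {a R k A : ℝ} (hk : 0 < k) (hstab : 0 < 1 + a * R)
    (hstab' : 0 < 1 + a * (R + k⁻¹)) (hA : 0 ≤ A) (b : ℝ) :
    ∫⁻ t : ℝ, ENNReal.ofReal (exp (-(k * (b - t) ^ 2))) *
        ENNReal.ofReal (√(A / (1 + a * R)) * exp (-(a / (1 + a * R) * t ^ 2))) =
      ENNReal.ofReal (√(A * (π / k) / (1 + a * (R + k⁻¹))) *
        exp (-(a / (1 + a * (R + k⁻¹)) * b ^ 2))) := by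
  have hsum := series_stiffness_add hk.ne' hstab.ne'
  have hsum_pos : 0 < a / (1 + a * R) + k := by
    rw [hsum]
    positivity
  have hprefactor : A / (1 + a * R) * (π / (a / (1 + a * R) + k)) =
      A * (π / k) / (1 + a * (R + k⁻¹)) := by
    rw [hsum]
    field_simp
  have hstiffness : a / (1 + a * R) * k / (a / (1 + a * R) + k) = a / (1 + a * (R + k⁻¹)) := by
    rw [hsum]
    field_simp
  have hpoint (t : ℝ) : ENNReal.ofReal (exp (-(k * (b - t) ^ 2))) *
        ENNReal.ofReal (√(A / (1 + a * R)) * exp (-(a / (1 + a * R) * t ^ 2))) =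
      ENNReal.ofReal √(A / (1 + a * R)) *
        ENNReal.ofReal (exp (-(a / (1 + a * R) * t ^ 2 + k * (b - t) ^ 2))) := by
    rw [neg_add, exp_add, ← ENNReal.ofReal_mul (exp_pos _).le, ← ENNReal.ofReal_mul (sqrt_nonneg _)]
    ring_nf
  simp_rw [hpoint]
  rw [lintegral_const_mul _ (by fun_prop), lintegral_springs_in_series hsum_pos,
    ← ENNReal.ofReal_mul (sqrt_nonneg _), ← mul_assoc, ← sqrt_mul (by positivity), hprefactor,
    hstiffness]

/-- The stability condition `0 < 1 + a R` says that the quadratic form in the exponent is positive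
definite. -/
lemma chainPartition_harmonic (hc : ∀ i, 2 ≤ i → 0 < c i) (K : ℝ) (hN : 1 ≤ N)
    (hstab : 0 < 1 + (c 1 + K) * tailCompliance c N) (b : ℝ) :
    chainPartition (fun i y => c i * y ^ 2) (fun y => K * y ^ 2) N b =
      ENNReal.ofReal (√((∏ i ∈ Finset.Icc 2 N, π / c i) / (1 + (c 1 + K) * tailCompliance c N)) *
        exp (-((c 1 + K) / (1 + (c 1 + K) * tailCompliance c N) * b ^ 2))) := by
  induction N, hN using Nat.le_induction generalizing b with
  | base =>
    simp only [chainPartition_one, tailCompliance_one, Finset.Icc_eq_empty_of_lt one_lt_two,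
      Finset.prod_empty, mul_zero, add_zero, div_one, sqrt_one, one_mul]
    ring_nf
  | succ N hN ih =>
    have hcN : 0 < c (N + 1) := hc _ (by omega)
    rw [tailCompliance_succ c hN] at hstab ⊢
    have hR : 0 ≤ tailCompliance c N := tailCompliance_nonneg hc N
    have hstab' : 0 < 1 + (c 1 + K) * tailCompliance c N :=
      one_add_mul_pos_of_le hR (le_add_of_nonneg_right (inv_pos.2 hcN).le) hstab
    rw [chainPartition_succ (fun i => by fun_prop) (by fun_prop) hN]
    simp_rw [ih hstab']
    rw [Finset.prod_Icc_succ_top (by omega)]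
    simpa only [← neg_mul] using lintegral_append_spring hcN hstab' hstab
      (Finset.prod_nonneg fun i hi => (div_pos pi_pos (hc i (Finset.mem_Icc.1 hi).1)).le) b

lemma freeEnergy_harmonic (hc : ∀ i, 2 ≤ i → 0 < c i) (K : ℝ) (hN : 1 ≤ N)
    (hstab : 0 < 1 + (c 1 + K) * tailCompliance c N) (x : ℝ) :
    freeEnergy (fun i y => c i * y ^ 2) (fun y => K * y ^ 2) N x =
      (c 1 + K) / (1 + (c 1 + K) * tailCompliance c N) * (N * x) ^ 2 +
        1 / 2 * log (1 + (c 1 + K) * tailCompliance c N) -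
        1 / 2 * log (∏ i ∈ Finset.Icc 2 N, π / c i) := by
  have hprod : 0 < ∏ i ∈ Finset.Icc 2 N, π / c i :=
    Finset.prod_pos fun i hi => div_pos pi_pos (hc i (Finset.mem_Icc.1 hi).1)
  rw [freeEnergy_eq_neg_log_chainPartition (fun i => by fun_prop) (by fun_prop),
    chainPartition_harmonic hc K hN hstab, ENNReal.toReal_ofReal (by positivity),
    log_mul (by positivity) (exp_pos _).ne', log_exp, log_sqrt (by positivity),
    log_div hprod.ne' hstab.ne']
  ring

lemma freeEnergy_defect_sub (hc : ∀ i, 2 ≤ i → 0 < c i) (K : ℝ) (hN : 1 ≤ N)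
    (hstab₀ : 0 < 1 + c 1 * tailCompliance c N)
    (hstab : 0 < 1 + (c 1 + K) * tailCompliance c N) (x : ℝ) :
    freeEnergy (fun i y => c i * y ^ 2) (fun y => K * y ^ 2) N x -
        freeEnergy (fun i y => c i * y ^ 2) (fun _ => 0) N x =
      K * (N * x) ^ 2 /
          ((1 + (c 1 + K) * tailCompliance c N) * (1 + c 1 * tailCompliance c N)) +
        1 / 2 * log ((1 + (c 1 + K) * tailCompliance c N) / (1 + c 1 * tailCompliance c N)) := by
  have hzero : (fun _ : ℝ => (0 : ℝ)) = fun y => 0 * y ^ 2 := by simp only [zero_mul]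
  rw [hzero, freeEnergy_harmonic hc K hN hstab, freeEnergy_harmonic hc 0 hN (by simpa using hstab₀),
    add_zero, log_div hstab.ne' hstab₀.ne']
  field_simp
  ring

end Springs

section CoarseGraining

lemma coarseStiffness_of_two_le (K : ℝ) (p : ℕ) {i : ℕ} (hi : 2 ≤ i) :
    coarseStiffness K p i = K / p :=
  if_neg (by omega)

lemma Vcg_eq_chainE (K : ℝ) {p M : ℕ} (hp : p ≠ 0) (hM : 1 ≤ M) (b : ℝ) (w : Fin (M - 1) → ℝ) :
    Vcg K p M b w = chainE (fun i y => coarseStiffness K p i * y ^ 2) M b w := by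
  obtain ⟨n, rfl⟩ : ∃ n, M = n + 1 := ⟨M - 1, by omega⟩
  rw [Vcg, chainE, Finset.sum_range_succ', add_comm, ← Finset.Ico_add_one_right_eq_Icc,
    Finset.sum_Ico_eq_sum_range]
  congr 1
  refine Finset.sum_congr rfl fun j _ => ?_
  rw [coarseStiffness_of_two_le K p (by omega), add_comm 2 j, show j + 2 - 1 = j + 1 from rfl]
  field_simp

/-- `Fcg` prescribes the end position `N x`, which is the strain `N x / M` for a chain of `M`
bonds. -/
lemma Fcg_eq_freeEnergy (K : ℝ) {p M : ℕ} (hp : p ≠ 0) (hM : 1 ≤ M) (N : ℕ) (x : ℝ)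
    (defect : ℝ → ℝ) :
    Fcg K p M N x defect =
      freeEnergy (fun i y => coarseStiffness K p i * y ^ 2) defect M (N * x / M) := by
  have hM' : (M : ℝ) ≠ 0 := by positivity
  rw [Fcg, freeEnergy, mul_div_cancel₀ _ hM']
  simp_rw [Vcg_eq_chainE K hp hM]

lemma tailCompliance_of_const {c : ℕ → ℝ} {k : ℝ} {N : ℕ} (hN : 1 ≤ N)
    (hc : ∀ i, 2 ≤ i → c i = k) : tailCompliance c N = ((N : ℝ) - 1) / k := by
  rw [tailCompliance, Finset.sum_congr rfl fun i hi => by rw [hc i (Finset.mem_Icc.1 hi).1],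
    Finset.sum_const, Nat.card_Icc, nsmul_eq_mul, Nat.cast_sub (by omega)]
  push_cast
  ring

lemma tailCompliance_coarseStiffness (K : ℝ) {p M N : ℕ} (hM : 1 ≤ M)
    (hN : N = p * (M - 1) + 1) :
    tailCompliance (coarseStiffness K p) M = ((N : ℝ) - 1) / K := by
  rw [tailCompliance_of_const hM fun i hi => coarseStiffness_of_two_le K p hi, hN]
  push_cast [Nat.cast_sub hM]
  rw [add_sub_cancel_right, div_div_eq_mul_div, mul_comm]

/-- `N` is the number of bonds of the uniform chain of stiffness `K₁` with the same compliance and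
the same end position as the `M`-bond chain. -/
lemma freeEnergy_defect_sub_of_tailCompliance {c : ℕ → ℝ} {M N : ℕ} {K₁ K₂ y x : ℝ}
    (hc : ∀ i, 2 ≤ i → 0 < c i) (hc₁ : c 1 = K₁) (hK₁ : 0 < K₁) (hM : 1 ≤ M) (hN : 1 ≤ N)
    (hstab : 0 < K₁ * N + K₂ * ((N : ℝ) - 1))
    (hR : tailCompliance c M = ((N : ℝ) - 1) / K₁) (hy : M * y = N * x) :
    freeEnergy (fun i r => c i * r ^ 2) (fun r => K₂ * r ^ 2) M y -
        freeEnergy (fun i r => c i * r ^ 2) (fun _ => 0) M y =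
      K₁ * K₂ * N * x ^ 2 / (K₁ * N + K₂ * ((N : ℝ) - 1)) +
        (1 / 2 : ℝ) * log ((K₁ * N + K₂ * ((N : ℝ) - 1)) / (K₁ * N)) := by
  have hN' : (0 : ℝ) < N := by positivity
  have huniform : 1 + c 1 * tailCompliance c M = N := by
    rw [hR, hc₁]
    field_simp
    ring
  have hdefect : 1 + (c 1 + K₂) * tailCompliance c M =
      (K₁ * N + K₂ * ((N : ℝ) - 1)) / K₁ := by
    rw [hR, hc₁]
    field_simp
    ring
  rw [freeEnergy_defect_sub hc K₂ hM (huniform ▸ hN') (hdefect ▸ div_pos hstab hK₁), huniform,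
    hdefect, hy, div_div]
  congr 1
  field_simp

lemma stable_of_nonneg {K₁ K₂ : ℝ} {N : ℕ} (hK₁ : 0 < K₁) (hK₂ : 0 ≤ K₂) (hN : 1 ≤ N) :
    0 < K₁ * N + K₂ * ((N : ℝ) - 1) :=
  add_pos_of_pos_of_nonneg (by positivity) (mul_nonneg hK₂ (sub_nonneg.2 (by exact_mod_cast hN)))

end CoarseGraining

theorem harmonic_coarse_graining_exact_general
    (K₁ K₂ : ℝ) (hK₁ : 0 < K₁) (p M N : ℕ) (hp : 1 ≤ p) (hM : 1 ≤ M) (hN : N = p * (M - 1) + 1)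
    (hstab : 0 < K₁ * N + K₂ * ((N : ℝ) - 1)) (x : ℝ) :
    Fcg K₁ p M N x (fun y => K₂ * y ^ 2) - Fcg K₁ p M N x (fun _ => 0) =
      K₁ * K₂ * N * x ^ 2 / (K₁ * N + K₂ * ((N : ℝ) - 1)) +
        (1 / 2 : ℝ) * Real.log ((K₁ * N + K₂ * ((N : ℝ) - 1)) / (K₁ * N)) ∧
    Fcg K₁ p M N x (fun y => K₂ * y ^ 2) - Fcg K₁ p M N x (fun _ => 0) =
      freeEnergy (fun _ y => K₁ * y ^ 2) (fun y => K₂ * y ^ 2) N x -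
        freeEnergy (fun _ y => K₁ * y ^ 2) (fun _ => 0) N x := by
  have hN_one : 1 ≤ N := by omega
  have hcoarse_pos : ∀ i, 2 ≤ i → 0 < coarseStiffness K₁ p i := fun i hi => by
    rw [coarseStiffness_of_two_le K₁ p hi]
    positivity
  have hcoarse := freeEnergy_defect_sub_of_tailCompliance hcoarse_pos (if_pos rfl) hK₁ hM hN_one
    hstab (tailCompliance_coarseStiffness K₁ hM hN) (mul_div_cancel₀ (N * x) (by positivity))
  have hfull := freeEnergy_defect_sub_of_tailCompliance (c := fun _ => K₁) (x := x)
    (fun _ _ => hK₁) rfl hK₁ hN_one hN_one hstab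
    (tailCompliance_of_const hN_one fun _ _ => rfl) rfl
  simp only [Fcg_eq_freeEnergy K₁ (by omega : p ≠ 0) hM]
  exact ⟨hcoarse, hcoarse.trans hfull.symm⟩

/-- for the harmonic chain, the coarse-grained free energy difference
is explicit, independent of `p` and `M`, and equals the defect-formation free energy
of the fully resolved chain with `N = p(M-1)+1` atoms. -/
theorem harmonic_coarse_graining_exact
    (K₁ K₂ : ℝ) (hK₁ : 0 < K₁) (hK₂ : 0 < K₂)
    (p M N : ℕ) (hp : 1 ≤ p) (hM : 2 ≤ M) (hN : N = p * (M - 1) + 1) (x : ℝ) :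
    Fcg K₁ p M N x (fun y => K₂ * y ^ 2) - Fcg K₁ p M N x (fun _ => 0) =
      K₁ * K₂ * N * x ^ 2 / (K₁ * N + K₂ * ((N : ℝ) - 1)) +
        (1 / 2 : ℝ) * Real.log ((K₁ * N + K₂ * ((N : ℝ) - 1)) / (K₁ * N)) ∧
    Fcg K₁ p M N x (fun y => K₂ * y ^ 2) - Fcg K₁ p M N x (fun _ => 0) =
      freeEnergy (fun _ y => K₁ * y ^ 2) (fun y => K₂ * y ^ 2) N x -
        freeEnergy (fun _ y => K₁ * y ^ 2) (fun _ => 0) N x := by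
  exact harmonic_coarse_graining_exact_general K₁ K₂ hK₁ p M N hp (by omega) hN
    (stable_of_nonneg hK₁ hK₂.le (by omega)) x
end
end
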